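/- For every Λ > 0 there exists a constant C > 0, depending only on φ and Λ, with the following property. Let r > 0, let x, y ∈ ℝ⁴ with |x−y| ≤ r, and let s₁ ∈ (0, 10r] and s₂ ∈ [r/10, 10r]. Suppose u is harmonic on an open set containing the closed ball B̄_y(20r), and suppose that H_φ(z,t) > 0 and N_φ(z,t) ≤ Λ for z ∈ {x, y} and all t ∈ (0, 20r]. Then H_φ(x,s₁) ≤ C·H_φ(y,s₂). -/

import Mathlib

open Metric MeasureTheory
open scoped RealInnerProductSpace

noncomputable section

abbrev E4 := EuclideanSpace ℝ (Fin 4)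

variable {E : Type*} [NormedAddCommGroup E] [InnerProductSpace ℝ E] [FiniteDimensional ℝ E]

/-- `u` is smooth and harmonic (the Laplacian, i.e. the sum of the pure second
derivatives in the coordinate directions, vanishes) on `Ω`. -/
def IsHarmonicOn (u : E4 → E) (Ω : Set E4) : Prop :=
  ContDiffOn ℝ (⊤ : ℕ∞) u Ω ∧
  ∀ x ∈ Ω, ∑ i : Fin 4,
    iteratedFDeriv ℝ 2 u x ![EuclideanSpace.single i (1:ℝ), EuclideanSpace.single i 1] = 0

/-- `|∇u(y)|²`, the squared Frobenius norm of the derivative of `u` at `y`. -/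
def gradSq (u : E4 → E) (y : E4) : ℝ :=
  ∑ i : Fin 4, ‖fderiv ℝ u y (EuclideanSpace.single i (1:ℝ))‖ ^ 2

/-- `D_φ(x,r) = ∫ |∇u(y)|² φ(|y−x|/r) dy`. -/
def Dphi (φ : ℝ → ℝ) (u : E4 → E) (x : E4) (r : ℝ) : ℝ :=
  ∫ y, gradSq u y * φ (‖y - x‖ / r)

/-- `H_φ(x,r) = −∫ |u(y)|² |y−x|⁻¹ φ'(|y−x|/r) dy`. -/
def Hphi (φ : ℝ → ℝ) (u : E4 → E) (x : E4) (r : ℝ) : ℝ :=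
  -∫ y, ‖u y‖ ^ 2 * ‖y - x‖⁻¹ * deriv φ (‖y - x‖ / r)

/-- `E_φ(x,r) = −∫ |∂_{ν_x}u(y)|² |y−x| φ'(|y−x|/r) dy`, where `ν_x(y) = (y−x)/|y−x|`. -/
def Ephi (φ : ℝ → ℝ) (u : E4 → E) (x : E4) (r : ℝ) : ℝ :=
  -∫ y, ‖fderiv ℝ u y (‖y - x‖⁻¹ • (y - x))‖ ^ 2 * ‖y - x‖ * deriv φ (‖y - x‖ / r)

/-- The smoothed frequency `N_φ(x,r) = r D_φ(x,r) / H_φ(x,r)`. -/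
def Nphi (φ : ℝ → ℝ) (u : E4 → E) (x : E4) (r : ℝ) : ℝ :=
  r * Dphi φ u x r / Hphi φ u x r

lemma hasDerivAt_param (f k : E4 → ℝ) (hf : ContDiff ℝ 1 f) (hfc : HasCompactSupport f)
    (hk : Continuous k) (hkc : HasCompactSupport k) (z : E4) (s : ℝ) :
    HasDerivAt (fun s : ℝ => ∫ w, f (z + s • w) * k w)
      (∫ w, fderiv ℝ f (z + s • w) w * k w) s := by
  have hf' : Continuous (fderiv ℝ f) := hf.continuous_fderiv (by norm_num)
  obtain ⟨K, hK⟩ := (hfc.fderiv (𝕜 := ℝ)).exists_bound_of_continuous hf'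
  have hint : ∀ g : E4 → ℝ, Continuous g → Integrable (fun w => g w * k w) := fun g hg =>
    (hg.mul hk).integrable_of_hasCompactSupport hkc.mul_left
  refine (hasDerivAt_integral_of_dominated_loc_of_deriv_le (μ := volume)
    (F := fun (s : ℝ) (w : E4) => f (z + s • w) * k w)
    (F' := fun (s : ℝ) (w : E4) => fderiv ℝ f (z + s • w) w * k w)
    (bound := fun w => K * ‖w‖ * |k w|) (s := Set.univ) Filter.univ_mem ?_ ?_ ?_ ?_ ?_ ?_).2
  · refine Filter.Eventually.of_forall fun t => ?_
    exact (hint (fun w => f (z + t • w)) (hf.continuous.comp (by fun_prop))).aestronglyMeasurable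
  · exact hint (fun w => f (z + s • w)) (hf.continuous.comp (by fun_prop))
  · refine (hint (fun w => fderiv ℝ f (z + s • w) w) ?_).aestronglyMeasurable
    exact (hf'.comp (by fun_prop : Continuous fun w : E4 => z + s • w)).clm_apply continuous_id
  · refine Filter.Eventually.of_forall fun w t _ => ?_
    rw [norm_mul, Real.norm_eq_abs (k w)]
    gcongr
    exact (ContinuousLinearMap.le_opNorm _ _).trans (by gcongr; exact hK _)
  · have : Continuous fun w : E4 => K * ‖w‖ * |k w| := by fun_prop
    exact this.integrable_of_hasCompactSupport (HasCompactSupport.mul_left hkc.norm)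
  · refine Filter.Eventually.of_forall fun w t _ => ?_
    refine HasDerivAt.mul_const ?_ _
    have h1 : HasDerivAt (fun t : ℝ => z + t • w) w t := by
      simpa using ((hasDerivAt_id t).smul_const w).const_add z
    exact ((hf.differentiable (by norm_num)) _).hasFDerivAt.comp_hasDerivAt t h1

lemma ibp (g Φ : E4 → ℝ) (hg : ContDiff ℝ 1 g) (hΦ : ContDiff ℝ 1 Φ) (hc : HasCompactSupport Φ)
    (v : E4) : ∫ w, g w * fderiv ℝ Φ w v = - ∫ w, fderiv ℝ g w v * Φ w := by
  have hg' : Continuous fun w => fderiv ℝ g w v :=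
    (hg.continuous_fderiv (by norm_num)).clm_apply continuous_const
  have hΦ' : Continuous fun w => fderiv ℝ Φ w v :=
    (hΦ.continuous_fderiv (by norm_num)).clm_apply continuous_const
  have hc' : HasCompactSupport fun w => fderiv ℝ Φ w v := hc.fderiv_apply (𝕜 := ℝ) v
  refine integral_mul_fderiv_eq_neg_fderiv_mul_of_integrable ?_ ?_ ?_ ?_ ?_
  · exact (hg'.mul hΦ.continuous).integrable_of_hasCompactSupport hc.mul_left
  · exact (hg.continuous.mul hΦ').integrable_of_hasCompactSupport hc'.mul_left
  · exact (hg.continuous.mul hΦ.continuous).integrable_of_hasCompactSupport hc.mul_left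
  · exact fun x _ => (hg.differentiable (by norm_num)) x
  · exact fun x _ => (hΦ.differentiable (by norm_num)) x

structure Cut (φ : ℝ → ℝ) : Prop where
  smooth : ContDiff ℝ (⊤ : ℕ∞) φ
  anti : Antitone φ
  one : ∀ t ≤ (3/4 : ℝ), φ t = 1
  zero : ∀ t, (1:ℝ) ≤ t → φ t = 0

namespace Cut
variable {φ : ℝ → ℝ} (h : Cut φ)
include h

lemma nonneg (t : ℝ) : 0 ≤ φ t := by
  rw [← h.zero (max t 1) (le_max_right _ _)]; exact h.anti (le_max_left _ _)

lemma cont_deriv : Continuous (deriv φ) := h.smooth.continuous_deriv (by simp)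

lemma deriv_nonpos (t : ℝ) : deriv φ t ≤ 0 := h.anti.deriv_nonpos

lemma deriv_small (t : ℝ) (ht : t ≤ 3/4) : deriv φ t = 0 := by
  have hs : Set.EqOn (deriv φ) 0 (Set.Iio (3/4)) := by
    intro s hs
    have : φ =ᶠ[nhds s] fun _ => 1 := by
      filter_upwards [Iio_mem_nhds hs] with a ha using h.one a (le_of_lt ha)
    simp [this.deriv_eq]
  have := hs.closure h.cont_deriv continuous_const
  rw [closure_Iio] at this
  exact this ht

lemma deriv_big (t : ℝ) (ht : 1 ≤ t) : deriv φ t = 0 := by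
  have hs : Set.EqOn (deriv φ) 0 (Set.Ioi 1) := by
    intro s hs
    have : φ =ᶠ[nhds s] fun _ => 0 := by
      filter_upwards [Ioi_mem_nhds hs] with a ha using h.zero a (le_of_lt ha)
    simp [this.deriv_eq]
  have := hs.closure h.cont_deriv continuous_const
  rw [closure_Ioi] at this
  exact this ht

lemma bound : ∃ M > 0, ∀ t, -deriv φ t ≤ M := by
  obtain ⟨K, hK⟩ := (isCompact_Icc (a := (0:ℝ)) (b := 1)).exists_bound_of_continuousOn
    h.cont_deriv.continuousOn
  refine ⟨max K 1, by positivity, fun t => ?_⟩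
  by_cases ht : t ∈ Set.Icc (0:ℝ) 1
  · exact (neg_le_abs _).trans ((hK t ht).trans (le_max_left _ _))
  · have : deriv φ t = 0 := by
      rw [Set.mem_Icc, not_and_or] at ht
      rcases ht with ht | ht
      · exact h.deriv_small t (by linarith)
      · exact h.deriv_big t (by linarith)
    rw [this]; simp

/-- the radial cutoff is smooth -/
lemma contDiff_radial : ContDiff ℝ 1 (fun w : E4 => φ ‖w‖) := by
  rw [contDiff_iff_contDiffAt]
  intro w
  by_cases hw : w = 0
  · subst hw
    have : (fun w : E4 => φ ‖w‖) =ᶠ[nhds 0] fun _ => 1 := by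
      filter_upwards [Metric.ball_mem_nhds (0:E4) (by norm_num : (0:ℝ) < 3/4)] with a ha
      exact h.one _ (by simpa using (mem_ball_zero_iff.1 ha).le)
    exact contDiffAt_const.congr_of_eventuallyEq this
  · exact ((h.smooth.of_le (by simp)).contDiffAt (x := ‖w‖)).comp w (contDiffAt_norm ℝ hw)

lemma compact_of (k : E4 → ℝ) (hk : ∀ w, 1 ≤ ‖w‖ → k w = 0) : HasCompactSupport k := by
  refine HasCompactSupport.intro (isCompact_closedBall (0:E4) 1) fun x hx => hk x ?_
  simp at hx; exact hx.le

lemma compact_radial : HasCompactSupport (fun w : E4 => φ ‖w‖) :=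
  h.compact_of _ fun w hw => h.zero _ hw

lemma fderiv_radial (w v : E4) :
    fderiv ℝ (fun w : E4 => φ ‖w‖) w v = deriv φ ‖w‖ * ‖w‖⁻¹ * ⟪w, v⟫ := by
  by_cases hw : w = 0
  · subst hw
    have : (fun w : E4 => φ ‖w‖) =ᶠ[nhds 0] fun _ => 1 := by
      filter_upwards [Metric.ball_mem_nhds (0:E4) (by norm_num : (0:ℝ) < 3/4)] with a ha
      exact h.one _ (by simpa using (mem_ball_zero_iff.1 ha).le)
    simp [this.fderiv_eq]
  · have h1 := (hasStrictFDerivAt_norm_sq w).hasFDerivAt.sqrt (by simpa using hw)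
    simp only [Real.sqrt_sq (norm_nonneg _)] at h1
    have h2 : HasDerivAt φ (deriv φ ‖w‖) ‖w‖ :=
      ((h.smooth.differentiable (by simp)) _).hasDerivAt
    have h3 := h2.comp_hasFDerivAt w h1
    have h4 := h3.fderiv
    simp only [Function.comp_def] at h4
    rw [h4]
    have : ‖w‖ ≠ 0 := by simpa using hw
    simp
    field_simp

lemma cont_psi : Continuous (fun w : E4 => -(‖w‖⁻¹ * deriv φ ‖w‖)) := by
  rw [continuous_iff_continuousAt]
  intro w
  by_cases hw : w = 0
  · subst hw
    have : (fun w : E4 => -(‖w‖⁻¹ * deriv φ ‖w‖)) =ᶠ[nhds 0] fun _ => 0 := by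
      filter_upwards [Metric.ball_mem_nhds (0:E4) (by norm_num : (0:ℝ) < 3/4)] with a ha
      rw [h.deriv_small _ (by simpa using (mem_ball_zero_iff.1 ha).le)]; simp
    exact continuousAt_const.congr this.symm
  · have := h.cont_deriv
    have h2 : ‖w‖ ≠ 0 := by simpa using hw
    fun_prop (disch := assumption)

lemma compact_psi : HasCompactSupport (fun w : E4 => -(‖w‖⁻¹ * deriv φ ‖w‖)) :=
  h.compact_of _ fun w hw => by rw [h.deriv_big _ hw]; simp

end Cut
lemma cov (F : E4 → ℝ) (z : E4) (s : ℝ) (hs : 0 < s) :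
    ∫ y, F y = s ^ 4 * ∫ w, F (z + s • w) := by
  have h1 := Measure.integral_comp_smul (volume : Measure E4) (fun y => F (z + y)) s
  rw [h1, integral_add_left_eq_self (μ := (volume : Measure E4)) F z]
  simp only [finrank_euclideanSpace, Fintype.card_fin, smul_eq_mul]
  rw [abs_of_pos (by positivity)]
  field_simp

abbrev ee (i : Fin 4) : E4 := EuclideanSpace.single i (1:ℝ)

lemma sum_ee (w : E4) : w = ∑ i, w i • ee i := by
  ext j
  simp [ee, Finset.sum_apply, Pi.single_apply]

lemma fderiv_expand (f : E4 → ℝ) (p w : E4) :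
    fderiv ℝ f p w = ∑ i, w i * fderiv ℝ f p (ee i) := by
  conv_lhs => rw [sum_ee w]
  simp only [map_sum, map_smul, smul_eq_mul]

lemma contDiff_aff (z : E4) (s : ℝ) : ContDiff ℝ 1 (fun w : E4 => z + s • w) := by fun_prop

lemma fderiv_aff (g : E4 → ℝ) (hg : ContDiff ℝ 1 g) (z w v : E4) (s : ℝ) :
    fderiv ℝ (fun w : E4 => g (z + s • w)) w v = s * fderiv ℝ g (z + s • w) v := by
  have h1 : HasFDerivAt (fun w : E4 => z + s • w) (s • ContinuousLinearMap.id ℝ E4) w :=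
    ((hasFDerivAt_id w).const_smul s).const_add z
  have h2 := ((hg.differentiable (by norm_num)) (z + s • w)).hasFDerivAt.comp w h1
  have h3 := h2.fderiv
  simp only [Function.comp_def] at h3
  rw [h3]; simp

section
variable {φ : ℝ → ℝ} (h : Cut φ)
include h

lemma green (f : E4 → ℝ) (hf : ContDiff ℝ 2 f) (z : E4) (s : ℝ) :
    ∫ w, fderiv ℝ f (z + s • w) w * (-(‖w‖⁻¹ * deriv φ ‖w‖)) =
      s * ∫ w, (∑ i, fderiv ℝ (fun y => fderiv ℝ f y (ee i)) (z + s • w) (ee i)) * φ ‖w‖ := by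
  have hd : ∀ i, ContDiff ℝ 1 (fun y => fderiv ℝ f y (ee i)) := fun i =>
    (hf.fderiv_right (m := 1) (by norm_num)).clm_apply contDiff_const
  have hd' : ∀ i, ContDiff ℝ 1 (fun w => fderiv ℝ f (z + s • w) (ee i)) := fun i =>
    (hd i).comp (contDiff_aff z s)
  have hdd : ∀ i, Continuous fun w => fderiv ℝ (fun y => fderiv ℝ f y (ee i)) (z + s • w) (ee i) :=
    fun i => (((hd i).continuous_fderiv (by norm_num)).comp
      (contDiff_aff z s).continuous).clm_apply continuous_const
  have hR := h.contDiff_radial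
  have hR' : ∀ i, Continuous fun w => fderiv ℝ (fun w : E4 => φ ‖w‖) w (ee i) := fun i =>
    (hR.continuous_fderiv (by norm_num)).clm_apply continuous_const
  have e1 : ∀ w : E4, fderiv ℝ f (z + s • w) w * (-(‖w‖⁻¹ * deriv φ ‖w‖)) =
      ∑ i, -(fderiv ℝ f (z + s • w) (ee i) * fderiv ℝ (fun w : E4 => φ ‖w‖) w (ee i)) := by
    intro w
    rw [fderiv_expand, Finset.sum_mul]
    refine Finset.sum_congr rfl fun i _ => ?_
    rw [h.fderiv_radial]
    simp [ee, EuclideanSpace.inner_single_right]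
    ring
  simp_rw [e1]
  rw [integral_finsetSum _ fun i _ => ?_]
  · simp_rw [Finset.sum_mul]
    rw [integral_finsetSum _ fun i _ => ?_, Finset.mul_sum]
    · refine Finset.sum_congr rfl fun i _ => ?_
      rw [integral_neg, ibp _ _ (hd' i) hR h.compact_radial, neg_neg, ← integral_const_mul]
      congr 1
      ext w
      rw [fderiv_aff _ (hd i)]; ring
    · exact ((hdd i).mul hR.continuous).integrable_of_hasCompactSupport h.compact_radial.mul_left
  · exact (((hd' i).continuous.mul (hR' i)).integrable_of_hasCompactSupport
      (h.compact_radial.fderiv_apply (𝕜 := ℝ) _).mul_left).neg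

lemma green2 (f : E4 → ℝ) (hf : ContDiff ℝ 2 f) (z : E4) (s : ℝ) :
    s * ∫ w, fderiv ℝ f (z + s • w) w * φ ‖w‖ =
      - ∫ w, f (z + s • w) * (4 * φ ‖w‖ + ‖w‖ * deriv φ ‖w‖) := by
  have hf1 : ContDiff ℝ 1 f := hf.of_le (by norm_num)
  have hR := h.contDiff_radial
  have hc : ∀ i : Fin 4, ContDiff ℝ 1 fun w : E4 => w i := fun i => by fun_prop
  have hP : ∀ i : Fin 4, ContDiff ℝ 1 fun w : E4 => w i * φ ‖w‖ := fun i => (hc i).mul hR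
  have hPc : ∀ i : Fin 4, HasCompactSupport fun w : E4 => w i * φ ‖w‖ := fun i =>
    h.compact_radial.mul_left
  have hg : ContDiff ℝ 1 fun w => f (z + s • w) := hf1.comp (contDiff_aff z s)
  have key : ∀ w : E4, ∑ i, fderiv ℝ (fun w : E4 => w i * φ ‖w‖) w (ee i) =
      4 * φ ‖w‖ + ‖w‖ * deriv φ ‖w‖ := by
    intro w
    have : ∀ i : Fin 4, fderiv ℝ (fun w : E4 => w i * φ ‖w‖) w (ee i) =
        φ ‖w‖ + deriv φ ‖w‖ * ‖w‖⁻¹ * (w i) ^ 2 := by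
      intro i
      rw [fderiv_fun_mul (((hc i).differentiable (by norm_num)) w)
        ((hR.differentiable (by norm_num)) w)]
      have h1 : HasFDerivAt (fun w : E4 => w i) (EuclideanSpace.proj i : E4 →L[ℝ] ℝ) w :=
        (EuclideanSpace.proj i : E4 →L[ℝ] ℝ).hasFDerivAt
      rw [h1.fderiv]
      simp [h.fderiv_radial, ee, EuclideanSpace.inner_single_right]
      ring
    simp_rw [this]
    rw [Finset.sum_add_distrib, ← Finset.mul_sum]
    have h2 : ∑ i, (w i) ^ 2 = ‖w‖ ^ 2 := by
      rw [EuclideanSpace.norm_sq_eq]; simp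
    rw [h2]
    simp
    by_cases hw : ‖w‖ = 0
    · simp [hw]
    · field_simp
  simp_rw [← key, Finset.mul_sum]
  rw [integral_finsetSum _ fun i _ => ?_, ← integral_const_mul, ← Finset.sum_neg_distrib]
  · simp_rw [fun i => ibp _ _ hg (hP i) (hPc i) (ee i), neg_neg, fderiv_aff f hf1]
    rw [← integral_finsetSum _ fun i _ => ?_]
    · congr 1
      ext w
      rw [fderiv_expand, Finset.sum_mul, Finset.mul_sum]
      exact Finset.sum_congr rfl fun i _ => by ring
    · have : Continuous fun w => fderiv ℝ f (z + s • w) (ee i) :=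
        (((hf1).continuous_fderiv (by norm_num)).comp
          (contDiff_aff z s).continuous).clm_apply continuous_const
      exact ((continuous_const.mul this).mul (hP i).continuous).integrable_of_hasCompactSupport
        (hPc i).mul_left
  · have : Continuous fun w => fderiv ℝ (fun w : E4 => w i * φ ‖w‖) w (ee i) :=
      ((hP i).continuous_fderiv (by norm_num)).clm_apply continuous_const
    exact (hg.continuous.mul this).integrable_of_hasCompactSupport
      ((hPc i).fderiv_apply (𝕜 := ℝ) _).mul_left

lemma Hphi_scale {F : Type} [NormedAddCommGroup F] (u : E4 → F) (z : E4) (s : ℝ)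
    (hs : 0 < s) : -∫ y, ‖u y‖ ^ 2 * ‖y - z‖⁻¹ * deriv φ (‖y - z‖ / s) =
      s ^ 3 * ∫ w, ‖u (z + s • w)‖ ^ 2 * (-(‖w‖⁻¹ * deriv φ ‖w‖)) := by
  rw [cov _ z s hs, ← integral_const_mul, ← integral_const_mul, ← integral_neg]
  congr 1
  ext w
  have : ‖s • w‖ = s * ‖w‖ := by rw [norm_smul, Real.norm_of_nonneg hs.le]
  have e : s * ‖w‖ / s = ‖w‖ := by field_simp
  simp only [add_sub_cancel_left, this, e, mul_inv]
  field_simp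

end
section
variable {F : Type} [NormedAddCommGroup F] [InnerProductSpace ℝ F]

lemma lap_normSq (U : E4 → F) (hU : ContDiff ℝ 2 U) (p : E4) :
    ∑ i, fderiv ℝ (fun y => fderiv ℝ (fun q => ‖U q‖ ^ 2) y (ee i)) p (ee i) =
      2 * gradSq U p + 2 * ⟪U p, ∑ i : Fin 4, iteratedFDeriv ℝ 2 U p
        ![EuclideanSpace.single i (1:ℝ), EuclideanSpace.single i 1]⟫ := by
  have hd : Differentiable ℝ U := hU.differentiable (by norm_num)
  have hd2 : Differentiable ℝ (fderiv ℝ U) :=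
    (hU.fderiv_right (m := 1) (by norm_num)).differentiable (by norm_num)
  rw [gradSq, inner_sum, Finset.mul_sum, Finset.mul_sum, ← Finset.sum_add_distrib]
  refine Finset.sum_congr rfl fun i _ => ?_
  have e1 : (fun y => fderiv ℝ (fun q => ‖U q‖ ^ 2) y (ee i)) =
      fun y => 2 * ⟪U y, fderiv ℝ U y (ee i)⟫ := by
    ext y
    rw [(hd y).hasFDerivAt.norm_sq.fderiv]
    simp
  have h2 : HasFDerivAt (fun y => fderiv ℝ U y (ee i))
      ((fderiv ℝ (fderiv ℝ U) p).flip (ee i)) p := by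
    have := (hd2 p).hasFDerivAt.clm_apply (hasFDerivAt_const (ee i) p)
    refine this.congr_fderiv ?_
    ext v; simp
  have h3 := ((hd p).hasFDerivAt.inner ℝ h2).const_mul 2
  rw [e1, h3.fderiv, iteratedFDeriv_two_apply]
  simp [ee, fderivInnerCLM_apply]
  ring

def GG (φ : ℝ → ℝ) (U : E4 → F) (z : E4) (s : ℝ) : ℝ :=
  ∫ w, ‖U (z + s • w)‖ ^ 2 * (-(‖w‖⁻¹ * deriv φ ‖w‖))

def RR (φ : ℝ → ℝ) (U : E4 → F) (z : E4) (s : ℝ) : ℝ :=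
  ∫ w, ‖U (z + s • w)‖ ^ 2 * φ ‖w‖

structure Good (U : E4 → F) : Prop where
  smooth : ContDiff ℝ 2 U
  compact : HasCompactSupport U

def HarmAt (U : E4 → F) (p : E4) : Prop := ∑ i : Fin 4, iteratedFDeriv ℝ 2 U p
        ![EuclideanSpace.single i (1:ℝ), EuclideanSpace.single i 1] = 0

lemma Good.f2 {U : E4 → F} (hU : Good U) : ContDiff ℝ 2 (fun q => ‖U q‖ ^ 2) :=
  hU.smooth.norm_sq ℝ

lemma Good.fc {U : E4 → F} (hU : Good U) : HasCompactSupport (fun q => ‖U q‖ ^ 2) :=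
  hU.compact.comp_left (g := fun a : F => ‖a‖ ^ 2) (by simp)

variable {φ : ℝ → ℝ} (h : Cut φ) {U : E4 → F} (hU : Good U)
include h 

lemma H_eq (z : E4) {s : ℝ} (hs : 0 < s) : Hphi φ U z s = s ^ 3 * GG φ U z s :=
  Hphi_scale h U z s hs

lemma Q_eq (z : E4) {s : ℝ} (hs : 0 < s) :
    ∫ y, ‖U y‖ ^ 2 * φ (‖y - z‖ / s) = s ^ 4 * RR φ U z s := by
  rw [cov _ z s hs, RR]
  congr 2
  ext w
  have : ‖s • w‖ = s * ‖w‖ := by rw [norm_smul, Real.norm_of_nonneg hs.le]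
  have e : s * ‖w‖ / s = ‖w‖ := by field_simp
  simp only [add_sub_cancel_left, this, e]

lemma D_eq (z : E4) {s : ℝ} (hs : 0 < s) :
    Dphi φ U z s = s ^ 4 * ∫ w, gradSq U (z + s • w) * φ ‖w‖ := by
  rw [Dphi, cov _ z s hs]
  congr 2
  ext w
  have : ‖s • w‖ = s * ‖w‖ := by rw [norm_smul, Real.norm_of_nonneg hs.le]
  have e : s * ‖w‖ / s = ‖w‖ := by field_simp
  simp only [add_sub_cancel_left, this, e]

lemma D_nonneg (z : E4) (s : ℝ) : 0 ≤ Dphi φ U z s :=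
  integral_nonneg fun y => mul_nonneg
    (Finset.sum_nonneg fun i _ => by positivity) (h.nonneg _)

include hU

lemma GG_cont (z : E4) : Continuous (GG φ U z) := by
  rw [continuous_iff_continuousAt]
  intro s
  exact (hasDerivAt_param _ _ (hU.f2.of_le (by norm_num)) hU.fc h.cont_psi
    h.compact_psi z s).continuousAt

lemma GG_deriv (z : E4) {s : ℝ} (hs : 0 < s) (hh : ∀ p ∈ ball z s, HarmAt U p) :
    HasDerivAt (GG φ U z) (2 * Dphi φ U z s / s ^ 3) s := by
  have h1 := hasDerivAt_param _ _ (hU.f2.of_le (by norm_num)) hU.fc h.cont_psi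
    h.compact_psi z s
  rw [green h _ hU.f2] at h1
  refine h1.congr_deriv ?_
  rw [D_eq h z hs]
  have : ∀ w : E4, (∑ i, fderiv ℝ (fun y => fderiv ℝ (fun q => ‖U q‖ ^ 2) y (ee i))
      (z + s • w) (ee i)) * φ ‖w‖ = 2 * (gradSq U (z + s • w) * φ ‖w‖) := by
    intro w
    rcases le_or_gt 1 ‖w‖ with hw | hw
    · rw [h.zero _ hw]; simp
    · have hp : z + s • w ∈ ball z s := by
        rw [mem_ball, dist_eq_norm, add_sub_cancel_left, norm_smul, Real.norm_of_nonneg hs.le]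
        nlinarith
      have := hh _ hp
      rw [HarmAt] at this
      rw [lap_normSq U hU.smooth, this]
      simp; ring
  simp_rw [this]
  rw [integral_const_mul]
  field_simp

lemma GG_mono (z : E4) {S : ℝ} (hh : ∀ p ∈ ball z S, HarmAt U p) :
    MonotoneOn (GG φ U z) (Set.Icc 0 S) := by
  have hd : ∀ s ∈ Set.Ioo 0 S, HasDerivAt (GG φ U z) (2 * Dphi φ U z s / s ^ 3) s := fun s hs =>
    GG_deriv h hU z hs.1 fun p hp => hh p (ball_subset_ball hs.2.le hp)
  refine monotoneOn_of_deriv_nonneg (convex_Icc 0 S) (GG_cont h hU z).continuousOn ?_ ?_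
  · rw [interior_Icc]
    exact fun s hs => (hd s hs).differentiableAt.differentiableWithinAt
  · rw [interior_Icc]
    intro s hs
    rw [(hd s hs).deriv]
    have := D_nonneg h (U := U) z s
    have := hs.1
    positivity

lemma RR_le (z : E4) {S : ℝ} (hS : 0 < S) (hh : ∀ p ∈ ball z S, HarmAt U p) :
    4 * RR φ U z S ≤ GG φ U z S := by
  have hRd : ∀ s, HasDerivAt (RR φ U z)
      (∫ w, fderiv ℝ (fun q => ‖U q‖ ^ 2) (z + s • w) w * φ ‖w‖) s := fun s =>
    hasDerivAt_param _ _ (hU.f2.of_le (by norm_num)) hU.fc h.contDiff_radial.continuous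
      h.compact_radial z s
  have hder : ∀ s, HasDerivAt (fun s => s ^ 4 * (4 * RR φ U z s - GG φ U z S))
      (4 * s ^ 3 * (4 * RR φ U z s - GG φ U z S) + s ^ 4 * (4 *
        ∫ w, fderiv ℝ (fun q => ‖U q‖ ^ 2) (z + s • w) w * φ ‖w‖)) s := by
    intro s
    have := (hasDerivAt_pow 4 s).mul (((hRd s).const_mul 4).sub_const (GG φ U z S))
    refine this.congr_deriv ?_
    simp
  have hanti : AntitoneOn (fun s => s ^ 4 * (4 * RR φ U z s - GG φ U z S)) (Set.Icc 0 S) := by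
    refine antitoneOn_of_deriv_nonpos (convex_Icc 0 S)
      (fun s _ => (hder s).continuousAt.continuousWithinAt)
      (fun s _ => (hder s).differentiableAt.differentiableWithinAt) ?_
    rw [interior_Icc]
    intro s hs
    rw [(hder s).deriv]
    have hmono := GG_mono h hU z hh ⟨hs.1.le, hs.2.le⟩ ⟨hS.le, le_rfl⟩ hs.2.le
    have hg2 := green2 h _ hU.f2 z s
    have hcU : Continuous fun w => ‖U (z + s • w)‖ ^ 2 :=
      hU.f2.continuous.comp (contDiff_aff z s).continuous
    have hcd : Continuous fun w : E4 => ‖w‖ * deriv φ ‖w‖ := by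
      have := h.cont_deriv
      fun_prop
    have hi1 : Integrable fun w => ‖U (z + s • w)‖ ^ 2 * φ ‖w‖ :=
      (hcU.mul h.contDiff_radial.continuous).integrable_of_hasCompactSupport
        h.compact_radial.mul_left
    have hi2 : Integrable fun w => ‖U (z + s • w)‖ ^ 2 * (‖w‖ * deriv φ ‖w‖) :=
      (hcU.mul hcd).integrable_of_hasCompactSupport (HasCompactSupport.mul_left
        (h.compact_of _ fun w hw => by rw [h.deriv_big _ hw]; simp))
    have hi3 : Integrable fun w => ‖U (z + s • w)‖ ^ 2 * (-(‖w‖⁻¹ * deriv φ ‖w‖)) :=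
      (hcU.mul h.cont_psi).integrable_of_hasCompactSupport h.compact_psi.mul_left
    have hsplit : ∫ w, ‖U (z + s • w)‖ ^ 2 * (4 * φ ‖w‖ + ‖w‖ * deriv φ ‖w‖) =
        4 * RR φ U z s + ∫ w, ‖U (z + s • w)‖ ^ 2 * (‖w‖ * deriv φ ‖w‖) := by
      rw [RR, ← integral_const_mul, ← integral_add (hi1.const_mul 4) hi2]
      congr 1
      ext w; ring
    have hle : -∫ w, ‖U (z + s • w)‖ ^ 2 * (‖w‖ * deriv φ ‖w‖) ≤ GG φ U z s := by
      rw [← integral_neg]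
      refine integral_mono hi2.neg hi3 fun w => ?_
      simp only
      rw [← mul_neg]
      refine mul_le_mul_of_nonneg_left ?_ (by positivity)
      rcases le_or_gt 1 ‖w‖ with hw | hw
      · rw [h.deriv_big _ hw]; simp
      rcases le_or_gt ‖w‖ (3/4) with hw' | hw'
      · rw [h.deriv_small _ hw']; simp
      have h0 : 0 < ‖w‖ := by linarith
      have h1 : ‖w‖ ≤ ‖w‖⁻¹ := by
        exact hw.le.trans ((one_le_inv₀ h0).2 hw.le)
      nlinarith [h.deriv_nonpos ‖w‖]
    have hs3 : 0 ≤ 4 * s ^ 3 := by have := hs.1; positivity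
    set I := ∫ w, fderiv ℝ (fun q => ‖U q‖ ^ 2) (z + s • w) w * φ ‖w‖
    have e : 4 * s ^ 3 * (4 * RR φ U z s - GG φ U z S) + s ^ 4 * (4 * I) =
        4 * s ^ 3 * (4 * RR φ U z s - GG φ U z S + s * I) := by ring
    rw [e]
    exact mul_nonpos_of_nonneg_of_nonpos hs3 (by linarith)
  have := hanti ⟨le_rfl, hS.le⟩ ⟨hS.le, le_rfl⟩ hS.le
  simp only at this
  have hS4 : 0 < S ^ 4 := by positivity
  by_contra hc
  push Not at hc
  have : 0 < S ^ 4 * (4 * RR φ U z S - GG φ U z S) := mul_pos hS4 (by linarith)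
  norm_num at *
  linarith

lemma GG_growth (z : E4) {Λ a S : ℝ} (ha : 0 < a) (haS : a ≤ S)
    (hh : ∀ p ∈ ball z S, HarmAt U p)
    (hN : ∀ t ∈ Set.Ioc 0 S, 0 < Hphi φ U z t ∧ Nphi φ U z t ≤ Λ) :
    GG φ U z S ≤ (S / a) ^ (2 * Λ) * GG φ U z a := by
  have hder : ∀ s ∈ Set.Icc a S, HasDerivAt (fun s => s ^ (-(2 * Λ)) * GG φ U z s)
      ((-(2 * Λ)) * s ^ (-(2 * Λ) - 1) * GG φ U z s +
        s ^ (-(2 * Λ)) * (2 * Dphi φ U z s / s ^ 3)) s := by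
    intro s hs
    have h0 : 0 < s := ha.trans_le hs.1
    exact (Real.hasDerivAt_rpow_const (Or.inl h0.ne')).mul
      (GG_deriv h hU z h0 fun p hp => hh p (ball_subset_ball hs.2 hp))
  have hanti : AntitoneOn (fun s => s ^ (-(2 * Λ)) * GG φ U z s) (Set.Icc a S) := by
    refine antitoneOn_of_deriv_nonpos (convex_Icc a S)
      (fun s hs => (hder s hs).continuousAt.continuousWithinAt)
      (fun s hs => (hder s (interior_subset hs)).differentiableAt.differentiableWithinAt) ?_
    intro s hs
    have hs := interior_subset hs
    rw [(hder s hs).deriv]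
    have h0 : 0 < s := ha.trans_le hs.1
    obtain ⟨hH, hNN⟩ := hN s ⟨h0, hs.2⟩
    rw [Nphi, div_le_iff₀ hH, H_eq h z h0] at hNN
    rw [Real.rpow_sub_one h0.ne']
    have hp : 0 < s ^ (-(2 * Λ)) := Real.rpow_pos_of_pos h0 _
    have e : (-(2 * Λ)) * (s ^ (-(2 * Λ)) / s) * GG φ U z s +
        s ^ (-(2 * Λ)) * (2 * Dphi φ U z s / s ^ 3) =
        2 * s ^ (-(2 * Λ)) / s ^ 4 * (s * Dphi φ U z s - Λ * (s ^ 3 * GG φ U z s)) := by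
      field_simp
      ring
    rw [e]
    exact mul_nonpos_of_nonneg_of_nonpos (by positivity) (by linarith)
  have := hanti ⟨le_rfl, haS⟩ ⟨haS, le_rfl⟩ haS
  simp only at this
  have hS : 0 < S := ha.trans_le haS
  rw [Real.rpow_neg hS.le, Real.rpow_neg ha.le] at this
  rw [Real.div_rpow hS.le ha.le]
  have h1 : 0 < S ^ (2 * Λ) := Real.rpow_pos_of_pos hS _
  have h2 : 0 < a ^ (2 * Λ) := Real.rpow_pos_of_pos ha _
  calc GG φ U z S = S ^ (2 * Λ) * ((S ^ (2 * Λ))⁻¹ * GG φ U z S) := by field_simp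
    _ ≤ S ^ (2 * Λ) * ((a ^ (2 * Λ))⁻¹ * GG φ U z a) := by gcongr
    _ = _ := by field_simp

lemma core {Λ M r s₁ s₂ : ℝ} (hΛ : 0 < Λ) (hM : 0 < M) (hMb : ∀ t, -deriv φ t ≤ M)
    (hr : 0 < r) {x y : E4} (hxy : dist x y ≤ r)
    (hs₁ : s₁ ∈ Set.Ioc (0:ℝ) (10 * r)) (hs₂ : s₂ ∈ Set.Icc (r / 10) (10 * r))
    (hh : ∀ p ∈ ball y (16 * r), HarmAt U p)
    (hN : ∀ t ∈ Set.Ioc 0 (16 * r), 0 < Hphi φ U y t ∧ Nphi φ U y t ≤ Λ) :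
    Hphi φ U x s₁ ≤ (4 * M * (160 ^ 3 * 160 ^ (2 * Λ))) * Hphi φ U y s₂ := by
  have h10 : 0 < 10 * r := by linarith
  have h16 : 0 < 16 * r := by linarith
  have hs20 : 0 < s₂ := lt_of_lt_of_le (by positivity) hs₂.1
  have hGnn : ∀ z s, 0 ≤ GG φ U z s := fun z s => integral_nonneg fun w => by
    refine mul_nonneg (by positivity) ?_
    have : 0 ≤ ‖w‖⁻¹ := by positivity
    nlinarith [h.deriv_nonpos ‖w‖]
  have hhx : ∀ p ∈ ball x (10 * r), HarmAt U p := fun p hp => hh p (by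
    rw [mem_ball] at *
    linarith [dist_triangle p x y])
  have step1 : Hphi φ U x s₁ ≤ Hphi φ U x (10 * r) := by
    rw [H_eq h x hs₁.1, H_eq h x h10]
    have := GG_mono h hU x hhx ⟨hs₁.1.le, hs₁.2⟩ ⟨h10.le, le_rfl⟩ hs₁.2
    have h0 := hs₁.1
    have h0' := hs₁.2
    have := hGnn x s₁
    gcongr
  have step2 : Hphi φ U x (10 * r) ≤ M / r * ∫ p, ‖U p‖ ^ 2 * φ (‖p - y‖ / (16 * r)) := by
    rw [Hphi, ← integral_neg, ← integral_const_mul]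
    refine integral_mono_of_nonneg (Filter.Eventually.of_forall fun p => ?_) ?_
      (Filter.Eventually.of_forall fun p => ?_)
    · have : 0 ≤ ‖U p‖ ^ 2 * ‖p - x‖⁻¹ := by positivity
      simp only [Pi.zero_apply]
      nlinarith [h.deriv_nonpos (‖p - x‖ / (10 * r))]
    · refine Integrable.const_mul ?_ _
      have hc : Continuous fun p => ‖U p‖ ^ 2 * φ (‖p - y‖ / (16 * r)) := by
        have := h.smooth.continuous
        have := hU.smooth.continuous
        fun_prop
      exact hc.integrable_of_hasCompactSupport hU.fc.mul_right
    · simp only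
      have e : -(‖U p‖ ^ 2 * ‖p - x‖⁻¹ * deriv φ (‖p - x‖ / (10 * r))) =
        ‖U p‖ ^ 2 * (‖p - x‖⁻¹ * -deriv φ (‖p - x‖ / (10 * r))) := by ring
      have e2 : M / r * (‖U p‖ ^ 2 * φ (‖p - y‖ / (16 * r))) =
        ‖U p‖ ^ 2 * (M / r * φ (‖p - y‖ / (16 * r))) := by ring
      rw [e, e2]
      refine mul_le_mul_of_nonneg_left ?_ (by positivity)
      have hnn := h.nonneg (‖p - y‖ / (16 * r))
      rcases le_or_gt 1 (‖p - x‖ / (10 * r)) with hw | hw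
      · rw [h.deriv_big _ hw]; simp; positivity
      rcases le_or_gt (‖p - x‖ / (10 * r)) (3/4) with hw' | hw'
      · rw [h.deriv_small _ hw']; simp; positivity
      rw [div_lt_iff₀ h10] at hw
      rw [lt_div_iff₀ h10] at hw'
      have h3 : ‖p - y‖ / (16 * r) ≤ 3 / 4 := by
        rw [div_le_iff₀ h16]
        rw [← dist_eq_norm] at *
        linarith [dist_triangle p x y]
      rw [h.one _ h3, mul_one, div_eq_inv_mul M r]
      have : ‖p - x‖⁻¹ ≤ r⁻¹ := inv_anti₀ hr (by linarith)
      have h5 := h.deriv_nonpos (‖p - x‖ / (10 * r))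
      have h6 := hMb (‖p - x‖ / (10 * r))
      exact mul_le_mul this h6 (by linarith) (by positivity)
  have step3 := RR_le h hU y h16 hh
  have step4 := GG_growth h hU y hs20 (by linarith [hs₂.2]) hh hN
  have hr160 : 16 * r / s₂ ≤ 160 := by
    rw [div_le_iff₀ hs20]; linarith [hs₂.1]
  have step5 : (16 * r / s₂) ^ (2 * Λ) ≤ 160 ^ (2 * Λ) :=
    Real.rpow_le_rpow (by positivity) hr160 (by positivity)
  rw [Q_eq h y h16] at step2
  have hg := hGnn y s₂
  have h16' : 16 * r ≤ 160 * s₂ := by linarith [hs₂.1]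
  calc Hphi φ U x s₁ ≤ M / r * ((16 * r) ^ 4 * RR φ U y (16 * r)) := step1.trans step2
    _ ≤ M / r * ((16 * r) ^ 4 * (GG φ U y (16 * r) / 4)) := by gcongr; linarith
    _ = 4 * M * ((16 * r) ^ 3 * GG φ U y (16 * r)) := by field_simp; ring
    _ ≤ 4 * M * ((160 * s₂) ^ 3 * (160 ^ (2 * Λ) * GG φ U y s₂)) := by
        have := hGnn y (16 * r)
        gcongr
        exact step4.trans (by gcongr)
    _ = _ := by rw [H_eq h y hs20]; ring

end

lemma H_congr {φ : ℝ → ℝ} (h : Cut φ) {F : Type} [NormedAddCommGroup F] [InnerProductSpace ℝ F]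
    [FiniteDimensional ℝ F] {u U : E4 → F} {z : E4} {s : ℝ} (hs : 0 < s)
    (he : ∀ p ∈ ball z s, u p = U p) : Hphi φ u z s = Hphi φ U z s := by
  rw [Hphi, Hphi]
  congr 2
  ext p
  rcases le_or_gt 1 (‖p - z‖ / s) with hw | hw
  · rw [h.deriv_big _ hw]; simp
  · rw [div_lt_one hs, ← dist_eq_norm] at hw
    rw [he p hw]

lemma D_congr {φ : ℝ → ℝ} (h : Cut φ) {F : Type} [NormedAddCommGroup F] [InnerProductSpace ℝ F]
    [FiniteDimensional ℝ F] {u U : E4 → F} {z : E4} {s : ℝ} (hs : 0 < s)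
    (he : ∀ p ∈ ball z s, u p = U p) : Dphi φ u z s = Dphi φ U z s := by
  rw [Dphi, Dphi]
  congr 1
  ext p
  rcases le_or_gt 1 (‖p - z‖ / s) with hw | hw
  · rw [h.zero _ hw]; simp
  · rw [div_lt_one hs, ← dist_eq_norm] at hw
    have : u =ᶠ[nhds p] U := by
      filter_upwards [isOpen_ball.mem_nhds (mem_ball.2 hw)] with q hq using he q hq
    rw [gradSq, gradSq, this.fderiv_eq]

/-- Flat-case analogue of Lemma 4.2: comparability of the smoothed height at
nearby centers and comparable scales, with constant depending only on `φ` and `Λ`. -/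
theorem stmt_15 (φ : ℝ → ℝ) (hφs : ContDiff ℝ (⊤ : ℕ∞) φ) (hφa : Antitone φ)
    (hφ1 : ∀ t ≤ (3/4 : ℝ), φ t = 1) (hφ0 : ∀ t, (1:ℝ) ≤ t → φ t = 0)
    (Λ : ℝ) (hΛ : 0 < Λ) :
    ∃ C > (0:ℝ),
      ∀ (F : Type) [NormedAddCommGroup F] [InnerProductSpace ℝ F] [FiniteDimensional ℝ F],
      ∀ (u : E4 → F) (Ω : Set E4), IsOpen Ω → IsHarmonicOn u Ω →
      ∀ (r : ℝ), 0 < r → ∀ x y : E4, dist x y ≤ r →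
      ∀ s₁ ∈ Set.Ioc (0:ℝ) (10 * r), ∀ s₂ ∈ Set.Icc (r / 10) (10 * r),
      closedBall y (20 * r) ⊆ Ω →
      (∀ t ∈ Set.Ioc (0:ℝ) (20 * r),
        (0 < Hphi φ u x t ∧ Nphi φ u x t ≤ Λ) ∧
        (0 < Hphi φ u y t ∧ Nphi φ u y t ≤ Λ)) →
      Hphi φ u x s₁ ≤ C * Hphi φ u y s₂ := by
  have h : Cut φ := ⟨hφs, hφa, hφ1, hφ0⟩
  obtain ⟨M, hM, hMb⟩ := h.bound
  refine ⟨4 * M * (160 ^ 3 * 160 ^ (2 * Λ)), by positivity, ?_⟩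
  intro F _ _ _ u Ω hΩ hu r hr x y hxy s₁ hs₁ s₂ hs₂ hsub hN
  let χ : ContDiffBump y := ⟨17 * r, 19 * r, by positivity, by linarith⟩
  let U : E4 → F := fun p => χ p • u p
  have hts : tsupport U ⊆ closedBall y (19 * r) := by
    refine (tsupport_smul_subset_left _ _).trans ?_
    rw [χ.tsupport_eq]
  have hU : Good U := by
    refine ⟨contDiff_iff_contDiffAt.2 fun p => ?_, ?_⟩
    · by_cases hp : p ∈ tsupport U
      swap
      · exact contDiffAt_const.congr_of_eventuallyEq (notMem_tsupport_iff_eventuallyEq.1 hp)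
      have hpΩ : p ∈ Ω := hsub (closedBall_subset_closedBall (by linarith) (hts hp))
      exact χ.contDiffAt.smul ((hu.1.contDiffAt (hΩ.mem_nhds hpΩ)).of_le (by exact_mod_cast le_top))
    · exact (isCompact_closedBall y (19 * r)).of_isClosed_subset (isClosed_tsupport _) hts
  have hE : ∀ p ∈ ball y (17 * r), u p = U p := by
    intro p hp
    have : χ p = 1 := χ.one_of_mem_closedBall (ball_subset_closedBall hp)
    simp [U, this]
  have hh : ∀ p ∈ ball y (16 * r), HarmAt U p := by
    intro p hp
    have hp17 : p ∈ ball y (17 * r) := ball_subset_ball (by linarith) hp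
    have he : U =ᶠ[nhds p] u := by
      filter_upwards [isOpen_ball.mem_nhds hp17] with q hq using (hE q hq).symm
    have := hu.2 p (hsub (ball_subset_closedBall (ball_subset_ball (by linarith) hp)))
    rw [HarmAt, ← this]
    refine Finset.sum_congr rfl fun i _ => ?_
    rw [Filter.EventuallyEq.eq_of_nhds (Filter.EventuallyEq.iteratedFDeriv ℝ he 2)]
  have hEy : ∀ t ∈ Set.Ioc 0 (16 * r), ∀ p ∈ ball y t, u p = U p := fun t ht p hp =>
    hE p (ball_subset_ball (by linarith [ht.2]) hp)
  have key := core h hU hΛ hM hMb hr hxy hs₁ hs₂ hh (fun t ht => by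
    have := (hN t ⟨ht.1, by linarith [ht.2]⟩).2
    rw [Nphi, H_congr h ht.1 (hEy t ht), D_congr h ht.1 (hEy t ht)] at this
    exact this)
  have hs20 : 0 < s₂ := lt_of_lt_of_le (by positivity) hs₂.1
  rw [← H_congr h hs20 (hEy s₂ ⟨hs20, by linarith [hs₂.2]⟩),
    ← H_congr h hs₁.1 (fun p hp => hE p ?_)] at key
  · exact key
  · rw [mem_ball] at *
    linarith [dist_triangle p x y, hs₁.2]
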